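/- arXiv:1708.05573 — 9 statements merged into one kernel-verified Lean document; each statement's English description precedes it below -/
import Mathlib

section
/- Let Z, Z' ∈ {0,1}^{n×K} be cluster membership matrices with clustering matrices C = ZZ^T and C' = Z'Z'^T. Then δ̃(C, C') ≤ 4 δ(Z, Z'). -/
open Matrix BigOperators

/-- A cluster membership matrix: entries in {0,1}, every row has exactly one entry equal to 1. -/
def IsClusterMembership {n K : ℕ} (Z : Matrix (Fin n) (Fin K) ℝ) : Prop :=
  (∀ i k, Z i k = 0 ∨ Z i k = 1) ∧ ∀ i, ∃! k, Z i k = 1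

/-- The permutation matrix associated to a permutation of `Fin K`. -/
def permMat {K : ℕ} (q : Equiv.Perm (Fin K)) : Matrix (Fin K) (Fin K) ℝ :=
  Matrix.of fun i j => if q i = j then 1 else 0

/-- The entrywise ℓ0 "norm": the number of nonzero entries of a matrix. -/
noncomputable def zeroNorm {n K : ℕ} (A : Matrix (Fin n) (Fin K) ℝ) : ℕ :=
  (Finset.univ.filter fun p : Fin n × Fin K => A p.1 p.2 ≠ 0).card

/-- δ(Z,Z') = (1/n) · min over K×K permutation matrices Q of ‖ZQ − Z'‖₀. -/
noncomputable def deltaZ {n K : ℕ} (Z Z' : Matrix (Fin n) (Fin K) ℝ) : ℝ :=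
  (1 / (n : ℝ)) * (Finset.univ.inf' ⟨1, Finset.mem_univ 1⟩
    fun q : Equiv.Perm (Fin K) => ((zeroNorm (Z * permMat q - Z') : ℕ) : ℝ))

/-- δ̃(C,C') = (1/n²) ‖C − C'‖_F². -/
noncomputable def deltaTilde {n : ℕ} (C C' : Matrix (Fin n) (Fin n) ℝ) : ℝ :=
  (1 / ((n : ℝ))^2) * ∑ i, ∑ j, (C i j - C' i j)^2

/-- A cluster membership matrix is the indicator matrix of a labelling of its rows. -/
theorem IsClusterMembership.exists_label {n K : ℕ} {Z : Matrix (Fin n) (Fin K) ℝ}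
    (hZ : IsClusterMembership Z) :
    ∃ f : Fin n → Fin K, ∀ i k, Z i k = if f i = k then 1 else 0 := by
  choose f hf hu using hZ.2
  refine ⟨f, fun i k => ?_⟩
  split_ifs with h
  · exact h ▸ hf i
  · exact (hZ.1 i k).resolve_right fun h1 => h (hu i k h1).symm

theorem mul_transpose_apply_of_label {n K : ℕ} {Z : Matrix (Fin n) (Fin K) ℝ}
    {f : Fin n → Fin K} (hf : ∀ i k, Z i k = if f i = k then 1 else 0) (i j : Fin n) :
    (Z * Zᵀ) i j = if f i = f j then 1 else 0 := by
  simp [Matrix.mul_apply, hf, eq_comm]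

theorem mul_permMat_apply_of_label {n K : ℕ} {Z : Matrix (Fin n) (Fin K) ℝ}
    {f : Fin n → Fin K} (hf : ∀ i k, Z i k = if f i = k then 1 else 0)
    (q : Equiv.Perm (Fin K)) (i : Fin n) (k : Fin K) :
    (Z * permMat q) i k = if q (f i) = k then 1 else 0 := by
  simp only [Matrix.mul_apply, hf, permMat, Matrix.of_apply, ite_mul, one_mul, zero_mul,
    Finset.sum_ite_eq, Finset.mem_univ, if_true]

/-- Rows on which two labellings disagree contribute to the `ℓ0` distance of the indicator
matrices. -/
theorem card_ne_le_zeroNorm_sub {n K : ℕ} {W Z' : Matrix (Fin n) (Fin K) ℝ}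
    {f g : Fin n → Fin K} (hf : ∀ i k, W i k = if f i = k then 1 else 0)
    (hg : ∀ i k, Z' i k = if g i = k then 1 else 0) :
    (Finset.univ.filter fun i => f i ≠ g i).card ≤ zeroNorm (W - Z') := by
  refine Finset.card_le_card_of_injOn (fun i => (i, g i)) (fun i hi => ?_)
    fun i _ j _ h => congrArg Prod.fst h
  have hi' : f i ≠ g i := by simpa using hi
  simp [hf, hg, hi']

/-- The squared Frobenius distance of two clustering matrices is at most `2n` times the number of
rows on which the labellings disagree. -/
theorem sum_sq_sub_le_card_ne {n K : ℕ} (f g : Fin n → Fin K) :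
    ∑ i, ∑ j, ((if f i = f j then (1 : ℝ) else 0) - (if g i = g j then 1 else 0 : ℝ)) ^ 2 ≤
      2 * (n : ℝ) * ((Finset.univ.filter fun i => f i ≠ g i).card : ℝ) := by
  calc
    _ ≤ ∑ i, ∑ j, ((if f i ≠ g i then (1 : ℝ) else 0) + if f j ≠ g j then 1 else 0) := by
      refine Finset.sum_le_sum fun i _ => Finset.sum_le_sum fun j _ => ?_
      by_cases hi : f i = g i <;> by_cases hj : f j = g j
      · simp [hi, hj]
      all_goals
        simp only [hi, hj, ne_eq, not_true_eq_false, not_false_eq_true, if_true, if_false]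
        split_ifs <;> norm_num
    _ = _ := by
      simp only [Finset.sum_add_distrib, Finset.sum_const, Finset.card_univ, Fintype.card_fin,
        nsmul_eq_mul, ← Finset.mul_sum, Finset.sum_boole]
      ring

/-- δ̃(C, C') ≤ 4 δ(Z, Z') for clustering matrices C = ZZᵀ, C' = Z'Z'ᵀ. -/
theorem deltaTilde_le_four_mul_deltaZ {n K : ℕ}
    (Z Z' : Matrix (Fin n) (Fin K) ℝ)
    (hZ : IsClusterMembership Z) (hZ' : IsClusterMembership Z') :
    deltaTilde (Z * Zᵀ) (Z' * Z'ᵀ) ≤ 4 * deltaZ Z Z' := by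
  obtain ⟨f, hf⟩ := hZ.exists_label
  obtain ⟨g, hg⟩ := hZ'.exists_label
  obtain ⟨q, -, hq⟩ := Finset.exists_mem_eq_inf' (s := Finset.univ) ⟨1, Finset.mem_univ 1⟩
    fun q : Equiv.Perm (Fin K) => ((zeroNorm (Z * permMat q - Z') : ℕ) : ℝ)
  rw [deltaZ, hq, deltaTilde]
  have hcard : ((Finset.univ.filter fun i => q (f i) ≠ g i).card : ℝ) ≤
      zeroNorm (Z * permMat q - Z') :=
    Nat.cast_le.mpr (card_ne_le_zeroNorm_sub (mul_permMat_apply_of_label hf q) hg)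
  have hsum := sum_sq_sub_le_card_ne (fun i => q (f i)) g
  simp only [EmbeddingLike.apply_eq_iff_eq] at hsum
  simp only [mul_transpose_apply_of_label hf, mul_transpose_apply_of_label hg]
  rcases Nat.eq_zero_or_pos n with rfl | hn
  · simp
  have hn' : (0 : ℝ) < n := Nat.cast_pos.mpr hn
  calc
    _ ≤ 1 / (n : ℝ) ^ 2 * (4 * n * zeroNorm (Z * permMat q - Z')) := by
      gcongr
      refine hsum.trans ?_
      gcongr
      norm_num
    _ = _ := by
      field_simp
end

section
/- Let Z, Z' ∈ {0,1}^{n×K} be cluster membership matrices. Then for every K×K permutation matrix Q, ‖ZZ^T − Z'Z'^T‖_F ≤ 2√n · ‖ZQ − Z'‖_F. -/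
open Matrix BigOperators

/-- The Frobenius norm of a matrix. -/
noncomputable def frobNorm {a b : ℕ} (A : Matrix (Fin a) (Fin b) ℝ) : ℝ :=
  Real.sqrt (∑ i, ∑ j, (A i j)^2)

section Frobenius

attribute [local instance] Matrix.frobeniusNormedAddCommGroup

theorem frobNorm_eq_norm {a b : ℕ} (A : Matrix (Fin a) (Fin b) ℝ) : frobNorm A = ‖A‖ := by
  simp [frobNorm, Matrix.frobenius_norm_def, Real.sqrt_eq_rpow]

theorem frobNorm_add_le {a b : ℕ} (A B : Matrix (Fin a) (Fin b) ℝ) :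
    frobNorm (A + B) ≤ frobNorm A + frobNorm B := by
  simpa only [frobNorm_eq_norm] using norm_add_le A B

theorem frobNorm_mul_le {a b c : ℕ} (A : Matrix (Fin a) (Fin b) ℝ)
    (B : Matrix (Fin b) (Fin c) ℝ) : frobNorm (A * B) ≤ frobNorm A * frobNorm B := by
  simpa only [frobNorm_eq_norm] using Matrix.frobenius_norm_mul A B

theorem frobNorm_transpose {a b : ℕ} (A : Matrix (Fin a) (Fin b) ℝ) :
    frobNorm Aᵀ = frobNorm A := by
  simpa only [frobNorm_eq_norm] using Matrix.frobenius_norm_transpose A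

end Frobenius

theorem mul_permMat_apply {n K : ℕ} (Z : Matrix (Fin n) (Fin K) ℝ) (q : Equiv.Perm (Fin K))
    (i : Fin n) (k : Fin K) : (Z * permMat q) i k = Z i (q.symm k) := by
  simp [Matrix.mul_apply, permMat, ← Equiv.eq_symm_apply]

theorem mul_permMat_mul_transpose {n K : ℕ} (Z : Matrix (Fin n) (Fin K) ℝ)
    (q : Equiv.Perm (Fin K)) : (Z * permMat q) * (Z * permMat q)ᵀ = Z * Zᵀ := by
  ext i j
  simp only [Matrix.mul_apply (M := Z * permMat q), Matrix.mul_apply (M := Z) (N := Zᵀ),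
    Matrix.transpose_apply, mul_permMat_apply]
  exact Equiv.sum_comp q.symm fun k => Z i k * Z j k

theorem IsClusterMembership.mul_permMat {n K : ℕ} {Z : Matrix (Fin n) (Fin K) ℝ}
    (hZ : IsClusterMembership Z) (q : Equiv.Perm (Fin K)) :
    IsClusterMembership (Z * permMat q) := by
  refine ⟨fun i k => by simpa only [mul_permMat_apply] using hZ.1 i _, fun i => ?_⟩
  simp only [mul_permMat_apply]
  exact (q.symm.existsUnique_congr_right (q := fun k => Z i k = 1)).2 (hZ.2 i)

theorem IsClusterMembership.frobNorm_eq {n K : ℕ} {Z : Matrix (Fin n) (Fin K) ℝ}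
    (hZ : IsClusterMembership Z) : frobNorm Z = Real.sqrt n := by
  have row (i : Fin n) : ∑ k, Z i k ^ 2 = 1 := by
    obtain ⟨k, hk, huniq⟩ := hZ.2 i
    rw [Finset.sum_eq_single k, hk, one_pow]
    · intro l _ hl
      rw [(hZ.1 i l).resolve_right fun h => hl (huniq l h)]
      norm_num
    · simp
  simp [frobNorm, row]

/-- for cluster membership matrices Z, Z' and every K×K permutation matrix Q,
‖ZZᵀ − Z'Z'ᵀ‖_F ≤ 2√n ‖ZQ − Z'‖_F. -/
theorem frob_clusteringMatrix_diff_le {n K : ℕ}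
    (Z Z' : Matrix (Fin n) (Fin K) ℝ)
    (hZ : IsClusterMembership Z) (hZ' : IsClusterMembership Z') :
    ∀ q : Equiv.Perm (Fin K),
      frobNorm (Z * Zᵀ - Z' * Z'ᵀ) ≤ 2 * Real.sqrt n * frobNorm (Z * permMat q - Z') := by
  intro q
  have hY := (hZ.mul_permMat q).frobNorm_eq
  rw [← mul_permMat_mul_transpose Z q]
  generalize Z * permMat q = Y at hY ⊢
  have decomp : Y * Yᵀ - Z' * Z'ᵀ = Y * (Y - Z')ᵀ + (Y - Z') * Z'ᵀ := by
    rw [Matrix.transpose_sub, Matrix.mul_sub, Matrix.sub_mul]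
    abel
  calc frobNorm (Y * Yᵀ - Z' * Z'ᵀ)
      ≤ frobNorm (Y * (Y - Z')ᵀ) + frobNorm ((Y - Z') * Z'ᵀ) := decomp ▸ frobNorm_add_le _ _
    _ ≤ frobNorm Y * frobNorm (Y - Z')ᵀ + frobNorm (Y - Z') * frobNorm Z'ᵀ :=
      add_le_add (frobNorm_mul_le _ _) (frobNorm_mul_le _ _)
    _ = 2 * Real.sqrt n * frobNorm (Y - Z') := by
      rw [frobNorm_transpose, frobNorm_transpose, hY, hZ'.frobNorm_eq]
      ring
end

section
/- Fix n, T ∈ ℕ and a real τ > 0. For ℓ = 1,…,T let y^{(ℓ)} ∈ {0,1}^{n×n} and let Ĉ^{(ℓ)}, C be real n×n matrices. Set N_{ij} = Σ_{ℓ=1}^T y^{(ℓ)}_{ij}, and define Ĉ by Ĉ_{ij} = 1_{\{N_{ij} ≥ τ\}} · (Σ_{ℓ=1}^T y^{(ℓ)}_{ij} Ĉ^{(ℓ)}_{ij}) / N_{ij}. Then Σ_{i,j} (Ĉ_{ij} − C_{ij} 1_{\{N_{ij} ≥ τ\}})² ≤ (1/τ) · Σ_{ℓ=1}^T Σ_{i,j}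 y^{(ℓ)}_{ij} (Ĉ^{(ℓ)}_{ij} − C_{ij})². -/
open Matrix BigOperators

/-- A weighted average with total weight at least `τ` deviates from `c`, in square, by at most
`1 / τ` times the weighted sum of squared deviations. -/
lemma sq_weighted_average_sub_le {ι : Type*} (s : Finset ι) {τ : ℝ} (hτ : 0 < τ)
    {w : ι → ℝ} (hw : ∀ i ∈ s, 0 ≤ w i) (hτw : τ ≤ ∑ i ∈ s, w i) (x : ι → ℝ) (c : ℝ) :
    ((∑ i ∈ s, w i * x i) / ∑ i ∈ s, w i - c) ^ 2
      ≤ 1 / τ * ∑ i ∈ s, w i * (x i - c) ^ 2 := by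
  have hW : 0 < ∑ i ∈ s, w i := hτ.trans_le hτw
  have hnonneg : ∀ i ∈ s, 0 ≤ w i * (x i - c) ^ 2 := fun i hi =>
    mul_nonneg (hw i hi) (sq_nonneg _)
  have hcs : (∑ i ∈ s, w i * (x i - c)) ^ 2
      ≤ (∑ i ∈ s, w i) * ∑ i ∈ s, w i * (x i - c) ^ 2 :=
    Finset.sum_sq_le_sum_mul_sum_of_sq_le_mul s hw hnonneg fun i _ => le_of_eq (by ring)
  have hdev : (∑ i ∈ s, w i * x i) / ∑ i ∈ s, w i - c
      = (∑ i ∈ s, w i * (x i - c)) / ∑ i ∈ s, w i := by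
    simp only [mul_sub, Finset.sum_sub_distrib, ← Finset.sum_mul]
    field_simp
  calc ((∑ i ∈ s, w i * x i) / ∑ i ∈ s, w i - c) ^ 2
      = (∑ i ∈ s, w i * (x i - c)) ^ 2 / (∑ i ∈ s, w i) ^ 2 := by rw [hdev, div_pow]
    _ ≤ ((∑ i ∈ s, w i) * ∑ i ∈ s, w i * (x i - c) ^ 2) / (∑ i ∈ s, w i) ^ 2 := by gcongr
    _ = 1 / (∑ i ∈ s, w i) * ∑ i ∈ s, w i * (x i - c) ^ 2 := by field_simp
    _ ≤ 1 / τ * ∑ i ∈ s, w i * (x i - c) ^ 2 :=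
      mul_le_mul_of_nonneg_right (one_div_le_one_div_of_le hτ hτw) (Finset.sum_nonneg hnonneg)

/-- deterministic core of the PACE analysis: with
N_{ij} = Σ_ℓ y^{(ℓ)}_{ij} and Ĉ_{ij} = 1_{N_{ij} ≥ τ} (Σ_ℓ y^{(ℓ)}_{ij} Ĉ^{(ℓ)}_{ij})/N_{ij},
one has Σ_{i,j} (Ĉ_{ij} − C_{ij} 1_{N_{ij} ≥ τ})² ≤ (1/τ) Σ_ℓ Σ_{i,j} y^{(ℓ)}_{ij}(Ĉ^{(ℓ)}_{ij} − C_{ij})². -/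
theorem pace_E1_bound {n T : ℕ} (τ : ℝ) (hτ : 0 < τ)
    (y : Fin T → Matrix (Fin n) (Fin n) ℝ)
    (hy : ∀ ℓ i j, y ℓ i j = 0 ∨ y ℓ i j = 1)
    (Chatl : Fin T → Matrix (Fin n) (Fin n) ℝ)
    (C : Matrix (Fin n) (Fin n) ℝ)
    (N : Matrix (Fin n) (Fin n) ℝ)
    (hN : ∀ i j, N i j = ∑ ℓ, y ℓ i j)
    (Chat : Matrix (Fin n) (Fin n) ℝ)
    (hChat : ∀ i j, Chat i j =
      (if τ ≤ N i j then 1 else 0) * (∑ ℓ, y ℓ i j * Chatl ℓ i j) / N i j) :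
    ∑ i, ∑ j, (Chat i j - C i j * (if τ ≤ N i j then 1 else 0))^2
      ≤ (1 / τ) * ∑ ℓ, ∑ i, ∑ j, y ℓ i j * (Chatl ℓ i j - C i j)^2 := by
  have hy0 : ∀ ℓ i j, 0 ≤ y ℓ i j := fun ℓ i j => by
    rcases hy ℓ i j with h | h <;> simp [h]
  have hcomm : ∑ ℓ, ∑ i, ∑ j, y ℓ i j * (Chatl ℓ i j - C i j) ^ 2
      = ∑ i, ∑ j, ∑ ℓ, y ℓ i j * (Chatl ℓ i j - C i j) ^ 2 := by
    rw [Finset.sum_comm]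
    exact Finset.sum_congr rfl fun i _ => Finset.sum_comm
  rw [hcomm]
  simp only [Finset.mul_sum (s := (Finset.univ : Finset (Fin n)))]
  refine Finset.sum_le_sum fun i _ => Finset.sum_le_sum fun j _ => ?_
  rw [hChat]
  split_ifs with h
  · rw [one_mul, mul_one, hN]
    exact sq_weighted_average_sub_le Finset.univ hτ (fun ℓ _ => hy0 ℓ i j) (hN i j ▸ h) _ _
  · simp only [zero_mul, zero_div, mul_zero, sub_zero, ne_eq, OfNat.ofNat_ne_zero,
      not_false_eq_true, zero_pow]
    exact mul_nonneg (one_div_nonneg.2 hτ.le)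
      (Finset.sum_nonneg fun ℓ _ => mul_nonneg (hy0 ℓ i j) (sq_nonneg _))
end

section
/- Fix n, T ∈ ℕ and a real τ > 0. For ℓ = 1,…,T let y^{(ℓ)} ∈ {0,1}^{n×n}, let Ĉ^{(ℓ)} be real n×n matrices, and let C ∈ {0,1}^{n×n}. Set N_{ij} = Σ_{ℓ=1}^T y^{(ℓ)}_{ij} and Ĉ_{ij} = 1_{\{N_{ij} ≥ τ\}} · (Σ_{ℓ=1}^T y^{(ℓ)}_{ij} Ĉ^{(ℓ)}_{ij}) / N_{ij}. Then (1/n²)‖Ĉ − C‖_F² ≤ (1/(τ n²)) · Σ_{ℓ=1}^T Σ_{i,j} y^{(ℓ)}_{ij} (Ĉ^{(ℓ)}_{ij} − C_{ij})² + (1/n²) · Σ_{i,j} C_{ij} 1_{\{N_{ij} < τ\}}. -/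
open Matrix BigOperators

/-- The squared deviation of a weighted mean from `c` is at most `1 / τ` times the weighted sum of
squared deviations, whenever the total weight is at least `τ > 0`. -/
lemma sq_weighted_mean_sub_le {ι : Type*} (s : Finset ι) {w : ι → ℝ} (x : ι → ℝ) (c : ℝ) {τ : ℝ}
    (hτ : 0 < τ) (hw : ∀ i ∈ s, 0 ≤ w i) (hle : τ ≤ ∑ i ∈ s, w i) :
    ((∑ i ∈ s, w i * x i) / (∑ i ∈ s, w i) - c) ^ 2
      ≤ (1 / τ) * ∑ i ∈ s, w i * (x i - c) ^ 2 := by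
  have hW : 0 < ∑ i ∈ s, w i := hτ.trans_le hle
  have hD : 0 ≤ ∑ i ∈ s, w i * (x i - c) ^ 2 :=
    Finset.sum_nonneg fun i hi => mul_nonneg (hw i hi) (sq_nonneg _)
  have hCS : (∑ i ∈ s, w i * (x i - c)) ^ 2
      ≤ (∑ i ∈ s, w i) * ∑ i ∈ s, w i * (x i - c) ^ 2 :=
    Finset.sum_sq_le_sum_mul_sum_of_sq_le_mul s hw
      (fun i hi => mul_nonneg (hw i hi) (sq_nonneg _)) (fun i _ => le_of_eq (by ring))
  have hmean : (∑ i ∈ s, w i * x i) / (∑ i ∈ s, w i) - c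
      = (∑ i ∈ s, w i * (x i - c)) / ∑ i ∈ s, w i := by
    simp only [mul_sub, Finset.sum_sub_distrib, ← Finset.sum_mul]
    field_simp
  calc ((∑ i ∈ s, w i * x i) / (∑ i ∈ s, w i) - c) ^ 2
      ≤ (1 / ∑ i ∈ s, w i) * ∑ i ∈ s, w i * (x i - c) ^ 2 := by
        rw [hmean, div_pow, div_le_iff₀ (by positivity)]
        refine hCS.trans_eq ?_
        field_simp
    _ ≤ (1 / τ) * ∑ i ∈ s, w i * (x i - c) ^ 2 := by gcongr

/-- deterministic form of the main PACE error bound: with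
N_{ij} = Σ_ℓ y^{(ℓ)}_{ij} and Ĉ_{ij} = 1_{N_{ij} ≥ τ} (Σ_ℓ y^{(ℓ)}_{ij} Ĉ^{(ℓ)}_{ij})/N_{ij},
for C with entries in {0,1} one has
(1/n²)‖Ĉ − C‖_F² ≤ (1/(τn²)) Σ_ℓ Σ_{i,j} y^{(ℓ)}_{ij}(Ĉ^{(ℓ)}_{ij} − C_{ij})²
                     + (1/n²) Σ_{i,j} C_{ij} 1_{N_{ij} < τ}. -/
theorem pace_deterministic_bound {n T : ℕ} (τ : ℝ) (hτ : 0 < τ)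
    (y : Fin T → Matrix (Fin n) (Fin n) ℝ)
    (hy : ∀ ℓ i j, y ℓ i j = 0 ∨ y ℓ i j = 1)
    (Chatl : Fin T → Matrix (Fin n) (Fin n) ℝ)
    (C : Matrix (Fin n) (Fin n) ℝ)
    (hC : ∀ i j, C i j = 0 ∨ C i j = 1)
    (N : Matrix (Fin n) (Fin n) ℝ)
    (hN : ∀ i j, N i j = ∑ ℓ, y ℓ i j)
    (Chat : Matrix (Fin n) (Fin n) ℝ)
    (hChat : ∀ i j, Chat i j =
      (if τ ≤ N i j then 1 else 0) * (∑ ℓ, y ℓ i j * Chatl ℓ i j) / N i j) :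
    (1 / ((n : ℝ))^2) * ∑ i, ∑ j, (Chat i j - C i j)^2
      ≤ (1 / (τ * ((n : ℝ))^2)) * ∑ ℓ, ∑ i, ∑ j, y ℓ i j * (Chatl ℓ i j - C i j)^2
        + (1 / ((n : ℝ))^2) * ∑ i, ∑ j, C i j * (if N i j < τ then 1 else 0) := by
  have hy0 : ∀ ℓ i j, 0 ≤ y ℓ i j := fun ℓ i j => by
    rcases hy ℓ i j with h | h <;> simp [h]
  have entry : ∀ i j, (Chat i j - C i j) ^ 2
      ≤ (1 / τ) * ∑ ℓ, y ℓ i j * (Chatl ℓ i j - C i j) ^ 2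
        + C i j * (if N i j < τ then 1 else 0) := by
    intro i j
    rw [hChat]
    by_cases h : τ ≤ N i j
    · rw [if_pos h, if_neg h.not_gt, one_mul, mul_zero, add_zero, hN]
      exact sq_weighted_mean_sub_le _ _ _ hτ (fun ℓ _ => hy0 ℓ i j) (hN i j ▸ h)
    · have hD : 0 ≤ (1 / τ) * ∑ ℓ, y ℓ i j * (Chatl ℓ i j - C i j) ^ 2 :=
        mul_nonneg (by positivity)
          (Finset.sum_nonneg fun ℓ _ => mul_nonneg (hy0 ℓ i j) (sq_nonneg _))
      have hsq : C i j ^ 2 = C i j := by rcases hC i j with h | h <;> simp [h]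
      rw [if_neg h, if_pos (not_le.mp h), zero_mul, zero_div, zero_sub, neg_sq, hsq, mul_one]
      exact le_add_of_nonneg_left hD
  have hswap : ∑ ℓ, ∑ i, ∑ j, y ℓ i j * (Chatl ℓ i j - C i j) ^ 2
      = ∑ i, ∑ j, ∑ ℓ, y ℓ i j * (Chatl ℓ i j - C i j) ^ 2 := by
    rw [Finset.sum_comm]
    exact Finset.sum_congr rfl fun i _ => Finset.sum_comm
  have hscale : 1 / (τ * (n : ℝ) ^ 2) = 1 / (n : ℝ) ^ 2 * (1 / τ) := by
    rw [one_div_mul_one_div, mul_comm τ]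
  rw [hswap, hscale, mul_assoc, ← mul_add]
  refine mul_le_mul_of_nonneg_left ?_ (by positivity)
  simp only [Finset.mul_sum, ← Finset.sum_add_distrib]
  simp only [Finset.mul_sum] at entry
  exact Finset.sum_le_sum fun i _ => Finset.sum_le_sum fun j _ => entry i j
end

section
/- Let Z ∈ {0,1}^{n×K} be a cluster membership matrix with clustering matrix C = ZZ^T and largest cluster proportion π_max = (max_k n_k)/n. On a probability space, let S_1, …, S_T be random subsets of {1,…,n} and let Ĉ^{(1)}, …, Ĉ^{(T)} be random n×n matrices with entries in [0,1] such that Ĉ^{(ℓ)}_{ij} = 0 whenever i ∉ S_ℓ or j ∉ S_ℓ. For each ℓ let C^{(ℓ)} be the matrix with C^{(ℓ)}_{ij} = C_{ij} if i,j ∈ S_ℓ and 0 otherwise, and assume the random variables ‖Ĉ^{(ℓ)} − C^{(ℓ)}‖_F², ℓ = 1,…,T, all have the same distribution. Let N_{ij} = #{ℓ : i ∈ S_ℓ and j ∈ S_ℓ}, fix a real τ with 1 ≤ τ ≤ T, and define Ĉ_{ij} = 1_{\{N_{ij} ≥ τ\}} · (Σ_{ℓ : i,j ∈ S_ℓ}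 Ĉ^{(ℓ)}_{ij}) / N_{ij}. Then E[δ̃(Ĉ, C)] ≤ (T/(τ n²)) · E[‖Ĉ^{(1)} − C^{(1)}‖_F²] + π_max · max_{i,j} P(N_{ij} < τ). -/
open Matrix BigOperators MeasureTheory ProbabilityTheory

/-- The size of cluster k under Z. -/
noncomputable def clusterSize {n K : ℕ} (Z : Matrix (Fin n) (Fin K) ℝ) (k : Fin K) : ℕ :=
  (Finset.univ.filter fun i => Z i k = 1).card

/-- Squared Frobenius norm. -/
noncomputable def sqFrob {a b : ℕ} (A : Matrix (Fin a) (Fin b) ℝ) : ℝ :=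
  ∑ i, ∑ j, (A i j)^2

/-- N_{ij} = #{ℓ : i ∈ S_ℓ and j ∈ S_ℓ}. -/
def Ncount {n T : ℕ} {Ω : Type*} (S : Fin T → Ω → Finset (Fin n)) (ω : Ω) (i j : Fin n) : ℕ :=
  (Finset.univ.filter fun ℓ => i ∈ S ℓ ω ∧ j ∈ S ℓ ω).card

/-- The PACE estimator: Ĉ_{ij}(ω) = 1_{N_{ij} ≥ τ} · (Σ_{ℓ : i,j ∈ S_ℓ} Ĉ^{(ℓ)}_{ij}) / N_{ij}. -/
noncomputable def paceEst {n T : ℕ} {Ω : Type*} (S : Fin T → Ω → Finset (Fin n))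
    (Chatl : Fin T → Ω → Matrix (Fin n) (Fin n) ℝ) (τ : ℝ) (ω : Ω) :
    Matrix (Fin n) (Fin n) ℝ :=
  Matrix.of fun i j =>
    if τ ≤ (Ncount S ω i j : ℝ) then
      (∑ ℓ, if i ∈ S ℓ ω ∧ j ∈ S ℓ ω then Chatl ℓ ω i j else 0) / (Ncount S ω i j : ℝ)
    else 0

/-- C^{(ℓ)}: the matrix C with entries zeroed outside s × s. -/
def restrictMat {n : ℕ} (C : Matrix (Fin n) (Fin n) ℝ) (s : Finset (Fin n)) :
    Matrix (Fin n) (Fin n) ℝ :=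
  Matrix.of fun i j => if i ∈ s ∧ j ∈ s then C i j else 0

/-- Each entry of the clustering matrix of a membership matrix is `0` or `1`, according to whether
the column index lies in the cluster of the row index. -/
theorem IsClusterMembership.exists_mul_transpose_apply {n K : ℕ} {Z : Matrix (Fin n) (Fin K) ℝ}
    (hZ : IsClusterMembership Z) (i : Fin n) :
    ∃ k, ∀ j, (Z * Zᵀ) i j = if Z j k = 1 then 1 else 0 := by
  obtain ⟨k, hk, huniq⟩ := hZ.2 i
  refine ⟨k, fun j => ?_⟩
  have hrow : ∀ k', k' ≠ k → Z i k' = 0 := fun k' hne =>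
    (hZ.1 i k').resolve_right fun h => hne (huniq k' h)
  rw [Matrix.mul_apply, Finset.sum_eq_single k (fun k' _ hne => by simp [hrow k' hne]) (by simp)]
  rcases hZ.1 j k with h | h <;> simp [Matrix.transpose_apply, hk, h]

theorem IsClusterMembership.mul_transpose_apply_eq_zero_or_one {n K : ℕ}
    {Z : Matrix (Fin n) (Fin K) ℝ} (hZ : IsClusterMembership Z) (i j : Fin n) :
    (Z * Zᵀ) i j = 0 ∨ (Z * Zᵀ) i j = 1 := by
  obtain ⟨k, hk⟩ := hZ.exists_mul_transpose_apply i
  rw [hk j]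
  split_ifs <;> simp

/-- The entries of a clustering matrix sum to at most `n` times the largest cluster size. -/
theorem IsClusterMembership.sum_mul_transpose_le {n K : ℕ} {Z : Matrix (Fin n) (Fin K) ℝ}
    (hZ : IsClusterMembership Z) :
    ∑ i, ∑ j, (Z * Zᵀ) i j
      ≤ (n : ℝ) * ((Finset.univ.sup fun k => clusterSize Z k : ℕ) : ℝ) := by
  have hrow : ∀ i, ∑ j, (Z * Zᵀ) i j
      ≤ ((Finset.univ.sup fun k => clusterSize Z k : ℕ) : ℝ) := by
    intro i
    obtain ⟨k, hk⟩ := hZ.exists_mul_transpose_apply i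
    have hsum : ∑ j, (Z * Zᵀ) i j = (clusterSize Z k : ℝ) := by
      simp [hk, clusterSize]
    rw [hsum]
    exact_mod_cast Finset.le_sup (f := fun k => clusterSize Z k) (Finset.mem_univ k)
  calc ∑ i, ∑ j, (Z * Zᵀ) i j
      ≤ ∑ _i : Fin n, ((Finset.univ.sup fun k => clusterSize Z k : ℕ) : ℝ) :=
        Finset.sum_le_sum fun i _ => hrow i
    _ = _ := by simp

/-- The squared error of an average over at least `τ` terms is at most `τ⁻¹` times the sum of the
squared errors. -/
theorem sq_average_sub_le {ι : Type*} (s : Finset ι) (x : ι → ℝ) (c τ : ℝ) (hτ : 0 < τ)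
    (hs : τ ≤ (s.card : ℝ)) :
    ((∑ l ∈ s, x l) / (s.card : ℝ) - c) ^ 2 ≤ τ⁻¹ * ∑ l ∈ s, (x l - c) ^ 2 := by
  have hpos : (0 : ℝ) < s.card := hτ.trans_le hs
  have hnn : 0 ≤ ∑ l ∈ s, (x l - c) ^ 2 := Finset.sum_nonneg fun _ _ => sq_nonneg _
  have havg : (∑ l ∈ s, x l) / (s.card : ℝ) - c = (∑ l ∈ s, (x l - c)) / s.card := by
    rw [Finset.sum_sub_distrib, Finset.sum_const, nsmul_eq_mul]
    field_simp
  calc ((∑ l ∈ s, x l) / (s.card : ℝ) - c) ^ 2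
      = (∑ l ∈ s, (x l - c)) ^ 2 / (s.card : ℝ) ^ 2 := by rw [havg, div_pow]
    _ ≤ ((s.card : ℝ) * ∑ l ∈ s, (x l - c) ^ 2) / (s.card : ℝ) ^ 2 := by
        gcongr
        exact sq_sum_le_card_mul_sum_sq
    _ = (s.card : ℝ)⁻¹ * ∑ l ∈ s, (x l - c) ^ 2 := by field_simp
    _ ≤ τ⁻¹ * ∑ l ∈ s, (x l - c) ^ 2 := by gcongr

/-- Entrywise error bound for the PACE estimator of a `{0, 1}`-valued matrix. -/
theorem sq_paceEst_sub_le {n T : ℕ} {Ω : Type*} (S : Fin T → Ω → Finset (Fin n))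
    (Chatl : Fin T → Ω → Matrix (Fin n) (Fin n) ℝ) {τ : ℝ} (hτ : 0 < τ) (ω : Ω)
    (C : Matrix (Fin n) (Fin n) ℝ) (i j : Fin n) (hC : C i j = 0 ∨ C i j = 1) :
    (paceEst S Chatl τ ω i j - C i j) ^ 2
      ≤ τ⁻¹ * ∑ ℓ, ((Chatl ℓ ω - restrictMat C (S ℓ ω)) i j) ^ 2
        + C i j * {ω' | (Ncount S ω' i j : ℝ) < τ}.indicator (fun _ => (1 : ℝ)) ω := by
  have hsum : 0 ≤ ∑ ℓ, ((Chatl ℓ ω - restrictMat C (S ℓ ω)) i j) ^ 2 :=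
    Finset.sum_nonneg fun _ _ => sq_nonneg _
  by_cases h : τ ≤ (Ncount S ω i j : ℝ)
  · have hind : {ω' | (Ncount S ω' i j : ℝ) < τ}.indicator (fun _ => (1 : ℝ)) ω = 0 := by
      simp [h]
    rw [hind, mul_zero, add_zero]
    simp only [paceEst, Matrix.of_apply, if_pos h]
    rw [← Finset.sum_filter]
    refine (sq_average_sub_le _ _ (C i j) τ hτ h).trans ?_
    gcongr
    rw [Finset.sum_filter]
    refine Finset.sum_le_sum fun ℓ _ => ?_
    split_ifs with hmem
    · simp [restrictMat, hmem]
    · positivity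
  · have hind : {ω' | (Ncount S ω' i j : ℝ) < τ}.indicator (fun _ => (1 : ℝ)) ω = 1 := by
      simpa using h
    rw [hind, mul_one]
    simp only [paceEst, Matrix.of_apply, if_neg h]
    have hsq : (0 - C i j) ^ 2 = C i j := by rcases hC with h0 | h1 <;> simp [*]
    rw [hsq]
    exact le_add_of_nonneg_left (by positivity)

theorem measurableSet_Ncount_lt {n T : ℕ} {Ω : Type*} [MeasurableSpace Ω]
    (S : Fin T → Ω → Finset (Fin n)) (hSmeas : ∀ ℓ A, MeasurableSet {ω | S ℓ ω = A})
    (τ : ℝ) (i j : Fin n) : MeasurableSet {ω | (Ncount S ω i j : ℝ) < τ} := by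
  have hmem : ∀ ℓ, MeasurableSet {ω | i ∈ S ℓ ω ∧ j ∈ S ℓ ω} := by
    intro ℓ
    have heq : {ω | i ∈ S ℓ ω ∧ j ∈ S ℓ ω}
        = ⋃ A ∈ {A : Finset (Fin n) | i ∈ A ∧ j ∈ A}, {ω | S ℓ ω = A} := by
      ext ω
      simp
    rw [heq]
    exact MeasurableSet.biUnion (Set.to_countable _) fun A _ => hSmeas ℓ A
  have hN : Measurable fun ω => (Ncount S ω i j : ℝ) := by
    have heq : (fun ω => (Ncount S ω i j : ℝ))
        = fun ω => ∑ ℓ, if i ∈ S ℓ ω ∧ j ∈ S ℓ ω then (1 : ℝ) else 0 := by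
      ext ω
      simp [Ncount]
    rw [heq]
    exact Finset.measurable_sum _ fun ℓ _ =>
      Measurable.ite (hmem ℓ) measurable_const measurable_const
  exact measurableSet_lt hN measurable_const

theorem sqFrob_nonneg {a b : ℕ} (A : Matrix (Fin a) (Fin b) ℝ) : 0 ≤ sqFrob A :=
  Finset.sum_nonneg fun _ _ => Finset.sum_nonneg fun _ _ => sq_nonneg _

theorem sqFrob_le_of_abs_le_one {a b : ℕ} (A : Matrix (Fin a) (Fin b) ℝ)
    (hA : ∀ i j, |A i j| ≤ 1) : sqFrob A ≤ (a : ℝ) * b := by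
  calc sqFrob A ≤ ∑ _i : Fin a, ∑ _j : Fin b, (1 : ℝ) :=
        Finset.sum_le_sum fun i _ => Finset.sum_le_sum fun j _ =>
          (sq_le_one_iff_abs_le_one _).2 (hA i j)
    _ = _ := by simp

/-- Error bound for the PACE estimator of a `{0, 1}`-valued matrix, before taking expectations. -/
theorem deltaTilde_paceEst_le {n T : ℕ} {Ω : Type*} (S : Fin T → Ω → Finset (Fin n))
    (Chatl : Fin T → Ω → Matrix (Fin n) (Fin n) ℝ) {τ : ℝ} (hτ : 0 < τ) (ω : Ω)
    (C : Matrix (Fin n) (Fin n) ℝ) (hC : ∀ i j, C i j = 0 ∨ C i j = 1) :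
    deltaTilde (paceEst S Chatl τ ω) C
      ≤ (1 / (n : ℝ) ^ 2) * (τ⁻¹ * ∑ ℓ, sqFrob (Chatl ℓ ω - restrictMat C (S ℓ ω))
        + ∑ i, ∑ j, C i j * {ω' | (Ncount S ω' i j : ℝ) < τ}.indicator (fun _ => (1 : ℝ)) ω) := by
  unfold deltaTilde
  gcongr
  calc ∑ i, ∑ j, (paceEst S Chatl τ ω i j - C i j) ^ 2
      ≤ ∑ i, ∑ j, (τ⁻¹ * ∑ ℓ, ((Chatl ℓ ω - restrictMat C (S ℓ ω)) i j) ^ 2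
        + C i j * {ω' | (Ncount S ω' i j : ℝ) < τ}.indicator (fun _ => (1 : ℝ)) ω) :=
        Finset.sum_le_sum fun i _ => Finset.sum_le_sum fun j _ =>
          sq_paceEst_sub_le S Chatl hτ ω C i j (hC i j)
    _ = _ := by
        simp only [Finset.sum_add_distrib, ← Finset.mul_sum, sqFrob]
        congr 2
        rw [Finset.sum_comm (s := (Finset.univ : Finset (Fin T)))]
        exact Finset.sum_congr rfl fun i _ => Finset.sum_comm

/-- main PACE bound, Theorem on the expected misclustering rate of PACE:
E[δ̃(Ĉ, C)] ≤ (T/(τn²)) E‖Ĉ^{(1)} − C^{(1)}‖_F² + π_max · max_{i,j} P(N_{ij} < τ). -/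
theorem pace_expected_bound {n K T : ℕ} (hn : 0 < n) (hT : 0 < T)
    {Ω : Type*} [MeasurableSpace Ω] (μ : Measure Ω) [IsProbabilityMeasure μ]
    (Z : Matrix (Fin n) (Fin K) ℝ) (hZ : IsClusterMembership Z)
    (S : Fin T → Ω → Finset (Fin n))
    (hSmeas : ∀ ℓ A, MeasurableSet {ω | S ℓ ω = A})
    (Chatl : Fin T → Ω → Matrix (Fin n) (Fin n) ℝ)
    (hCmeas : ∀ ℓ i j, Measurable fun ω => Chatl ℓ ω i j)
    (hC01 : ∀ ℓ ω i j, Chatl ℓ ω i j ∈ Set.Icc (0:ℝ) 1)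
    (hCzero : ∀ ℓ ω i j, (i ∉ S ℓ ω ∨ j ∉ S ℓ ω) → Chatl ℓ ω i j = 0)
    (τ : ℝ) (hτ1 : 1 ≤ τ) (hτT : τ ≤ T)
    (hIdent : ∀ ℓ : Fin T,
      IdentDistrib
        (fun ω => sqFrob (Chatl ℓ ω - restrictMat (Z * Zᵀ) (S ℓ ω)))
        (fun ω => sqFrob (Chatl ⟨0, hT⟩ ω - restrictMat (Z * Zᵀ) (S ⟨0, hT⟩ ω))) μ μ) :
    ∫ ω, deltaTilde (paceEst S Chatl τ ω) (Z * Zᵀ) ∂μ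
      ≤ ((T : ℝ) / (τ * ((n : ℝ))^2)) *
          ∫ ω, sqFrob (Chatl ⟨0, hT⟩ ω - restrictMat (Z * Zᵀ) (S ⟨0, hT⟩ ω)) ∂μ
        + (((Finset.univ.sup fun k => clusterSize Z k : ℕ) : ℝ) / (n : ℝ)) *
          (Finset.univ.sup' ⟨(⟨0, hn⟩, ⟨0, hn⟩), Finset.mem_univ _⟩
            fun p : Fin n × Fin n =>
              (μ {ω | ((Ncount S ω p.1 p.2 : ℝ) < τ)}).toReal) := by
  have hτ : 0 < τ := one_pos.trans_le hτ1
  have hC := hZ.mul_transpose_apply_eq_zero_or_one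
  have hsum := hZ.sum_mul_transpose_le
  generalize ((Finset.univ.sup fun k => clusterSize Z k : ℕ) : ℝ) = M at hsum ⊢
  generalize Z * Zᵀ = C at *
  set B : Fin n → Fin n → Set Ω := fun i j => {ω | (Ncount S ω i j : ℝ) < τ}
  have hBmeas : ∀ i j, MeasurableSet (B i j) := measurableSet_Ncount_lt S hSmeas τ
  have hFint : ∀ ℓ, Integrable (fun ω => sqFrob (Chatl ℓ ω - restrictMat C (S ℓ ω))) μ := by
    intro ℓ
    refine Integrable.of_bound (hIdent ℓ).aemeasurable_fst.aestronglyMeasurable ((n : ℝ) * n)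
      (Filter.Eventually.of_forall fun ω => ?_)
    rw [Real.norm_of_nonneg (sqFrob_nonneg _)]
    refine sqFrob_le_of_abs_le_one _ fun i j => ?_
    obtain ⟨h0, h1⟩ := hC01 ℓ ω i j
    simp only [Matrix.sub_apply, restrictMat, Matrix.of_apply]
    rw [abs_le]
    split_ifs
    · rcases hC i j with h | h <;> rw [h] <;> constructor <;> linarith
    · constructor <;> linarith
  have hIint : ∀ i j, Integrable (fun ω => C i j * (B i j).indicator (fun _ => (1 : ℝ)) ω) μ :=
    fun i j => ((integrable_const (1 : ℝ)).indicator (hBmeas i j)).const_mul _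
  have hFsum : Integrable
      (fun ω => τ⁻¹ * ∑ ℓ, sqFrob (Chatl ℓ ω - restrictMat C (S ℓ ω))) μ :=
    (integrable_finsetSum _ fun ℓ _ => hFint ℓ).const_mul _
  have hIsum : Integrable
      (fun ω => ∑ i, ∑ j, C i j * (B i j).indicator (fun _ => (1 : ℝ)) ω) μ :=
    integrable_finsetSum _ fun i _ => integrable_finsetSum _ fun j _ => hIint i j
  have hIval : ∫ ω, ∑ i, ∑ j, C i j * (B i j).indicator (fun _ => (1 : ℝ)) ω ∂μ
      = ∑ i, ∑ j, C i j * (μ (B i j)).toReal := by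
    rw [integral_finsetSum _ fun i _ => integrable_finsetSum _ fun j _ => hIint i j]
    refine Finset.sum_congr rfl fun i _ => ?_
    rw [integral_finsetSum _ fun j _ => hIint i j]
    refine Finset.sum_congr rfl fun j _ => ?_
    rw [integral_const_mul, integral_indicator_const _ (hBmeas i j)]
    simp [Measure.real]
  have hFval : ∫ ω, τ⁻¹ * ∑ ℓ, sqFrob (Chatl ℓ ω - restrictMat C (S ℓ ω)) ∂μ
      = τ⁻¹ * (T * ∫ ω, sqFrob (Chatl ⟨0, hT⟩ ω - restrictMat C (S ⟨0, hT⟩ ω)) ∂μ) := by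
    rw [integral_const_mul, integral_finsetSum _ fun ℓ _ => hFint ℓ,
      Finset.sum_congr rfl fun ℓ _ => (hIdent ℓ).integral_eq]
    simp
  set P : ℝ := Finset.univ.sup' ⟨(⟨0, hn⟩, ⟨0, hn⟩), Finset.mem_univ _⟩
    fun p : Fin n × Fin n => (μ (B p.1 p.2)).toReal
  have hle : ∀ i j, (μ (B i j)).toReal ≤ P := fun i j =>
    Finset.le_sup' (fun p : Fin n × Fin n => (μ (B p.1 p.2)).toReal) (Finset.mem_univ (i, j))
  have hP0 : 0 ≤ P := ENNReal.toReal_nonneg.trans (hle ⟨0, hn⟩ ⟨0, hn⟩)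
  have hsumP : ∑ i, ∑ j, C i j * (μ (B i j)).toReal ≤ n * M * P := by
    calc ∑ i, ∑ j, C i j * (μ (B i j)).toReal ≤ ∑ i, ∑ j, C i j * P := by
          refine Finset.sum_le_sum fun i _ => Finset.sum_le_sum fun j _ => ?_
          refine mul_le_mul_of_nonneg_left (hle i j) ?_
          rcases hC i j with h | h <;> simp [h]
      _ = (∑ i, ∑ j, C i j) * P := by simp only [Finset.sum_mul]
      _ ≤ n * M * P := by gcongr
  have hn' : (0 : ℝ) < n := by exact_mod_cast hn
  calc ∫ ω, deltaTilde (paceEst S Chatl τ ω) C ∂μ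
      ≤ ∫ ω, (1 / (n : ℝ) ^ 2) * (τ⁻¹ * ∑ ℓ, sqFrob (Chatl ℓ ω - restrictMat C (S ℓ ω))
        + ∑ i, ∑ j, C i j * (B i j).indicator (fun _ => (1 : ℝ)) ω) ∂μ := by
        refine integral_mono_of_nonneg (Filter.Eventually.of_forall fun ω => ?_)
          ((hFsum.add hIsum).const_mul _)
          (Filter.Eventually.of_forall fun ω => deltaTilde_paceEst_le S Chatl hτ ω C hC)
        exact mul_nonneg (by positivity)
          (Finset.sum_nonneg fun _ _ => Finset.sum_nonneg fun _ _ => sq_nonneg _)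
    _ = (1 / (n : ℝ) ^ 2) *
        (τ⁻¹ * (T * ∫ ω, sqFrob (Chatl ⟨0, hT⟩ ω - restrictMat C (S ⟨0, hT⟩ ω)) ∂μ)
          + ∑ i, ∑ j, C i j * (μ (B i j)).toReal) := by
        rw [integral_const_mul, integral_add hFsum hIsum, hFval, hIval]
    _ ≤ (1 / (n : ℝ) ^ 2) *
        (τ⁻¹ * (T * ∫ ω, sqFrob (Chatl ⟨0, hT⟩ ω - restrictMat C (S ⟨0, hT⟩ ω)) ∂μ)
          + n * M * P) := by gcongr
    _ = _ := by field_simp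
end

section
/- Let Ĉ be an n×n matrix with entries in [0,1], let C be an n×n matrix with entries in {0,1}, and let 0 < η < 1. Define the thresholded matrix Ĉ_η by (Ĉ_η)_{ij} = 1 if Ĉ_{ij} > η and 0 otherwise. Then δ̃(Ĉ_η, C) ≤ δ̃(Ĉ, C) / min{η², (1−η)²}; in particular, for η = 1/2, δ̃(Ĉ_{1/2}, C) ≤ 4 δ̃(Ĉ, C). -/
open Matrix BigOperators

/-- The entrywise thresholding of a matrix at level η. -/
noncomputable def threshold {n : ℕ} (C : Matrix (Fin n) (Fin n) ℝ) (η : ℝ) :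
    Matrix (Fin n) (Fin n) ℝ :=
  Matrix.of fun i j => if η < C i j then 1 else 0

/-- Thresholding at `η` increases the squared distance to a binary value by a factor of at most
`1 / min {η², (1 - η)²}`. -/
lemma sq_ite_lt_sub_le {x c η : ℝ} (hc : c = 0 ∨ c = 1) (hη0 : 0 < η) (hη1 : η < 1) :
    ((if η < x then 1 else 0) - c) ^ 2 ≤ (x - c) ^ 2 / min (η ^ 2) ((1 - η) ^ 2) := by
  have hmin : 0 < min (η ^ 2) ((1 - η) ^ 2) :=
    lt_min (pow_pos hη0 2) (pow_pos (sub_pos.2 hη1) 2)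
  rw [le_div_iff₀ hmin]
  have hl := min_le_left (η ^ 2) ((1 - η) ^ 2)
  have hr := min_le_right (η ^ 2) ((1 - η) ^ 2)
  rcases hc with rfl | rfl <;> split_ifs with h
  · nlinarith
  · nlinarith [sq_nonneg x]
  · nlinarith [sq_nonneg (x - 1)]
  · nlinarith

lemma deltaTilde_threshold_le_div {n : ℕ} (A C : Matrix (Fin n) (Fin n) ℝ)
    (hC : ∀ i j, C i j = 0 ∨ C i j = 1) {η : ℝ} (hη0 : 0 < η) (hη1 : η < 1) :
    deltaTilde (threshold A η) C ≤ deltaTilde A C / min (η ^ 2) ((1 - η) ^ 2) := by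
  simp only [deltaTilde, threshold, Matrix.of_apply]
  rw [mul_div_assoc, Finset.sum_div]
  simp only [Finset.sum_div]
  gcongr with i _ j _
  exact sq_ite_lt_sub_le (hC i j) hη0 hη1

/-- thresholding PACE: δ̃(Ĉ_η, C) ≤ δ̃(Ĉ, C) / min{η², (1−η)²};
in particular, for η = 1/2, δ̃(Ĉ_{1/2}, C) ≤ 4 δ̃(Ĉ, C). -/
theorem deltaTilde_threshold_le {n : ℕ}
    (Chat C : Matrix (Fin n) (Fin n) ℝ)
    (hChat : ∀ i j, Chat i j ∈ Set.Icc (0:ℝ) 1)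
    (hC : ∀ i j, C i j = 0 ∨ C i j = 1)
    (η : ℝ) (hη0 : 0 < η) (hη1 : η < 1) :
    deltaTilde (threshold Chat η) C ≤ deltaTilde Chat C / min (η^2) ((1 - η)^2)
    ∧ deltaTilde (threshold Chat (1/2)) C ≤ 4 * deltaTilde Chat C := by
  refine ⟨deltaTilde_threshold_le_div Chat C hC hη0 hη1, ?_⟩
  have h := deltaTilde_threshold_le_div Chat C hC (η := 1 / 2) (by norm_num) (by norm_num)
  norm_num at h ⊢
  linarith
end

section
/- Fix n, K, T, m ∈ ℕ with m, n, T ≥ 1, fix 0 < θ < 1 and set τ = θTm/n. For ℓ = 1,…,T let y^{(ℓ)} ∈ {0,1}^n and let Ẑ^{(ℓ)} be real n×K matrices. Let Z̄ ∈ {0,1}^{n×K} be a cluster membership matrix. Set N_i = Σ_{ℓ=1}^T y^{(ℓ)}_i and define Ẑ^{GALE}_{ik} = 1_{\{N_i ≥ τ\}} · (Σ_{ℓ=1}^T y^{(ℓ)}_i Ẑ^{(ℓ)}_{ik}) / N_i. Then ‖Ẑ^{GALE} − Z̄‖_F² ≤ (n/(θT)) · Σ_{ℓ=1}^T (1/m)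 Σ_{i,k} y^{(ℓ)}_i (Ẑ^{(ℓ)}_{ik} − Z̄_{ik})² + Σ_{i=1}^n 1_{\{N_i < τ\}}. -/
open Matrix BigOperators

/-- The squared error of a weighted average is at most the weighted average of squared errors. -/
theorem sq_weighted_average_sub_le_s14 {ι : Type*} [Fintype ι] (w x : ι → ℝ) (z : ℝ)
    (hw : ∀ l, 0 ≤ w l) (hpos : 0 < ∑ l, w l) :
    ((∑ l, w l * x l) / (∑ l, w l) - z) ^ 2 ≤
      (∑ l, w l * (x l - z) ^ 2) / ∑ l, w l := by
  have hcs : (∑ l, w l * (x l - z)) ^ 2 ≤ (∑ l, w l) * ∑ l, w l * (x l - z) ^ 2 :=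
    Finset.sum_sq_le_sum_mul_sum_of_sq_le_mul _ (fun l _ => hw l)
      (fun l _ => mul_nonneg (hw l) (sq_nonneg _)) (fun l _ => le_of_eq (by ring))
  have hsub : (∑ l, w l * x l) / (∑ l, w l) - z = (∑ l, w l * (x l - z)) / ∑ l, w l := by
    simp only [mul_sub, Finset.sum_sub_distrib, ← Finset.sum_mul]
    field_simp
  rw [hsub, div_pow, div_le_div_iff₀ (by positivity) hpos]
  nlinarith [mul_le_mul_of_nonneg_right hcs hpos.le]

/-- Every row of a cluster membership matrix has squared Euclidean norm one. -/
theorem IsClusterMembership.sum_sq_row {n K : ℕ} {Z : Matrix (Fin n) (Fin K) ℝ}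
    (hZ : IsClusterMembership Z) (i : Fin n) : ∑ k, Z i k ^ 2 = 1 := by
  obtain ⟨k, hk, huniq⟩ := hZ.2 i
  rw [Finset.sum_eq_single k, hk, one_pow]
  · intro j _ hj
    rcases hZ.1 i j with h | h
    · simp [h]
    · exact absurd (huniq j h) hj
  · simp

/-- deterministic GALE aggregation bound: with τ = θTm/n,
N_i = Σ_ℓ y^{(ℓ)}_i and Ẑ^{GALE}_{ik} = 1_{N_i ≥ τ} (Σ_ℓ y^{(ℓ)}_i Ẑ^{(ℓ)}_{ik})/N_i, one has
‖Ẑ^{GALE} − Z̄‖_F² ≤ (n/(θT)) Σ_ℓ (1/m) Σ_{i,k} y^{(ℓ)}_i (Ẑ^{(ℓ)}_{ik} − Z̄_{ik})²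
                    + Σ_i 1_{N_i < τ}. -/
theorem gale_deterministic_bound {n K T m : ℕ}
    (hn : 1 ≤ n) (hT : 1 ≤ T) (hm : 1 ≤ m)
    (θ : ℝ) (hθ0 : 0 < θ) (hθ1 : θ < 1)
    (y : Fin T → Fin n → ℝ)
    (hy : ∀ ℓ i, y ℓ i = 0 ∨ y ℓ i = 1)
    (Zhat : Fin T → Matrix (Fin n) (Fin K) ℝ)
    (Zbar : Matrix (Fin n) (Fin K) ℝ) (hZbar : IsClusterMembership Zbar)
    (N : Fin n → ℝ) (hN : ∀ i, N i = ∑ ℓ, y ℓ i)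
    (Zgale : Matrix (Fin n) (Fin K) ℝ)
    (hZgale : ∀ i k, Zgale i k =
      (if θ * T * m / n ≤ N i then 1 else 0) * (∑ ℓ, y ℓ i * Zhat ℓ i k) / N i) :
    ∑ i, ∑ k, (Zgale i k - Zbar i k)^2
      ≤ ((n : ℝ) / (θ * T)) *
          ∑ ℓ, (1 / (m : ℝ)) * ∑ i, ∑ k, y ℓ i * (Zhat ℓ i k - Zbar i k)^2
        + ∑ i, (if N i < θ * T * m / n then (1:ℝ) else 0) := by
  have hn' : (0 : ℝ) < n := by exact_mod_cast hn
  have hT' : (0 : ℝ) < T := by exact_mod_cast hT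
  have hm' : (0 : ℝ) < m := by exact_mod_cast hm
  have hτ : 0 < θ * T * m / n := by positivity
  have hy0 : ∀ ℓ i, 0 ≤ y ℓ i := fun ℓ i => by rcases hy ℓ i with h | h <;> simp [h]
  have hswap : ((n : ℝ) / (θ * T)) *
      ∑ ℓ, (1 / (m : ℝ)) * ∑ i, ∑ k, y ℓ i * (Zhat ℓ i k - Zbar i k) ^ 2
      = ∑ i, ∑ k, (∑ ℓ, y ℓ i * (Zhat ℓ i k - Zbar i k) ^ 2) / (θ * T * m / n) := by
    simp only [← Finset.sum_div, ← Finset.mul_sum]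
    rw [Finset.sum_comm, Finset.sum_congr rfl fun i _ => Finset.sum_comm]
    field_simp
    simp only [Finset.mul_sum]
  rw [hswap, ← Finset.sum_add_distrib]
  refine Finset.sum_le_sum fun i _ => ?_
  have hnonneg : ∀ k, 0 ≤ ∑ ℓ, y ℓ i * (Zhat ℓ i k - Zbar i k) ^ 2 := fun k =>
    Finset.sum_nonneg fun ℓ _ => mul_nonneg (hy0 ℓ i) (sq_nonneg _)
  by_cases h : θ * T * m / n ≤ N i
  · rw [if_neg h.not_gt, add_zero]
    refine Finset.sum_le_sum fun k _ => ?_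
    have hpos : 0 < ∑ ℓ, y ℓ i := hN i ▸ hτ.trans_le h
    rw [hZgale, if_pos h, one_mul, hN i]
    refine (sq_weighted_average_sub_le_s14 (fun ℓ => y ℓ i) (fun ℓ => Zhat ℓ i k) (Zbar i k)
      (fun ℓ => hy0 ℓ i) hpos).trans ?_
    exact div_le_div_of_nonneg_left (hnonneg k) hτ (hN i ▸ h)
  · rw [if_pos (not_le.mp h)]
    have hrow : ∑ k, (Zgale i k - Zbar i k) ^ 2 = 1 := by
      simp [hZgale, h, hZbar.sum_sq_row i]
    rw [hrow]
    exact le_add_of_nonneg_left (Finset.sum_nonneg fun k _ => div_nonneg (hnonneg k) hτ.le)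
end

section
/- Let m ≤ n and let S₁ and S₂ be independent uniform random m-subsets of {1,…,n}. Then P(|S₁ ∩ S₂| ≥ ⌈m²/(2n)⌉) ≥ 1 − exp(−m²/(16n)). -/
open MeasureTheory BigOperators

/-- The probability that an `m`-subset of an `n`-set avoids `c` given points is at most
`(1 - m / n) ^ c`. -/
lemma choose_sub_le_mul_pow {n m : ℕ} (hmn : m ≤ n) (hn : 0 < n) (c : ℕ) (hc : c ≤ n) :
    ((n - c).choose m : ℝ) ≤ n.choose m * (1 - (m : ℝ) / n) ^ c := by
  have hn' : (0 : ℝ) < n := by exact_mod_cast hn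
  have hmn' : (m : ℝ) ≤ n := by exact_mod_cast hmn
  have hr : 0 ≤ 1 - (m : ℝ) / n := by
    rw [sub_nonneg, div_le_one hn']; exact hmn'
  induction c with
  | zero => simp
  | succ c ih =>
    obtain ⟨k, rfl⟩ : ∃ k, n = k + 1 + c := ⟨n - (c + 1), by omega⟩
    have ih := ih (by omega)
    rw [show k + 1 + c - c = k + 1 by omega] at ih
    rw [show k + 1 + c - (c + 1) = k by omega, pow_succ, ← mul_assoc]
    refine le_trans ?_ (mul_le_mul_of_nonneg_right ih hr)
    rcases lt_or_ge k m with hk | hk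
    · rw [Nat.choose_eq_zero_of_lt hk]
      push_cast
      push_cast at hr
      positivity
    · have h1 : (k.choose m : ℝ) * (k + 1) = (k + 1).choose m * ((k : ℝ) + 1 - m) := by
        have := Nat.choose_mul_succ_eq k m
        rw [← Nat.cast_inj (R := ℝ)] at this
        rw [Nat.cast_mul, Nat.cast_mul, Nat.cast_sub (by omega)] at this
        exact_mod_cast this
      have hk' : (0 : ℝ) < (k : ℝ) + 1 := by positivity
      have h2 : (k.choose m : ℝ) = (k + 1).choose m * (1 - (m : ℝ) / (k + 1)) := by
        field_simp
        linarith
      rw [h2]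
      gcongr
      push_cast
      linarith [(Nat.cast_nonneg c : (0 : ℝ) ≤ c)]

/-- Generating function bound at `1 / 2` for the overlap of a fixed set with the `m`-subsets
of `Fin n`. -/
lemma sum_half_pow_card_inter_le {n m : ℕ} (hmn : m ≤ n) (hn : 0 < n) (A : Finset (Fin n)) :
    ∑ B ∈ Finset.powersetCard m (Finset.univ : Finset (Fin n)), (1 / 2 : ℝ) ^ (A ∩ B).card
      ≤ n.choose m * (1 - (m : ℝ) / (2 * n)) ^ A.card := by
  have hpt (B : Finset (Fin n)) : (1 / 2 : ℝ) ^ (A ∩ B).card =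
      (1 / 2) ^ A.card * ∑ C ∈ A.powerset, if Disjoint C B then (1 : ℝ) else 0 := by
    have hset : A.powerset.filter (fun C => Disjoint C B) = (A \ B).powerset := by
      ext C
      simp [Finset.subset_sdiff]
    rw [Finset.sum_boole, hset, Finset.card_powerset, ← Finset.card_sdiff_add_card_inter A B,
      pow_add, mul_right_comm, Nat.cast_pow, ← mul_pow]
    norm_num
  have hcount (C : Finset (Fin n)) :
      ∑ B ∈ Finset.powersetCard m (Finset.univ : Finset (Fin n)),
        (if Disjoint C B then (1 : ℝ) else 0) = (n - C.card).choose m := by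
    have hset : (Finset.powersetCard m (Finset.univ : Finset (Fin n))).filter
        (fun B => Disjoint C B) = Finset.powersetCard m Cᶜ := by
      ext B
      simp only [Finset.mem_filter, Finset.mem_powersetCard, Finset.subset_univ, true_and,
        Finset.subset_compl_iff_disjoint_left, and_comm]
    rw [Finset.sum_boole, hset, Finset.card_powersetCard, Finset.card_compl, Fintype.card_fin]
  simp_rw [hpt]
  rw [← Finset.mul_sum, Finset.sum_comm]
  simp_rw [hcount]
  calc (1 / 2 : ℝ) ^ A.card * ∑ C ∈ A.powerset, ((n - C.card).choose m : ℝ)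
      ≤ (1 / 2 : ℝ) ^ A.card * ∑ C ∈ A.powerset, n.choose m * (1 - (m : ℝ) / n) ^ C.card := by
        gcongr with C hC
        exact choose_sub_le_mul_pow hmn hn _ (by simpa using Finset.card_le_univ C)
    _ = n.choose m * (1 - (m : ℝ) / (2 * n)) ^ A.card := by
        have h := Finset.sum_pow_mul_eq_add_pow (1 - (m : ℝ) / n) 1 A
        simp only [one_pow, mul_one] at h
        rw [← Finset.mul_sum, h, mul_left_comm, ← mul_pow]
        congr 2
        field_simp
        ring

/-- Chernoff bound, in counting form, for the lower tail of the overlap of a fixed `m`-set with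
the `m`-subsets of `Fin n`. -/
lemma card_filter_inter_lt_le {n m : ℕ} (hmn : m ≤ n) (hn : 0 < n) {A : Finset (Fin n)}
    (hA : A.card = m) :
    (((Finset.powersetCard m (Finset.univ : Finset (Fin n))).filter
      (fun B => (A ∩ B).card < ⌈((m : ℝ) ^ 2) / (2 * n)⌉₊)).card : ℝ)
      ≤ n.choose m * Real.exp (-((m : ℝ) ^ 2) / (16 * n)) := by
  have hn' : (0 : ℝ) < n := by exact_mod_cast hn
  have hmn' : (m : ℝ) ≤ n := by exact_mod_cast hmn
  set d : ℝ := (m : ℝ) ^ 2 / n with hd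
  have hhalf : Real.exp (-(7 / 8)) ≤ 1 / 2 := by
    rw [Real.exp_neg, one_div]
    gcongr
    rw [← Real.log_le_iff_le_exp (by norm_num)]
    linarith [Real.log_two_lt_d9]
  have hmark (B : Finset (Fin n)) (hB : (A ∩ B).card < ⌈((m : ℝ) ^ 2) / (2 * n)⌉₊) :
      1 ≤ Real.exp (7 / 16 * d) * (1 / 2 : ℝ) ^ (A ∩ B).card := by
    have hlt : ((A ∩ B).card : ℝ) < d / 2 := by
      rw [Nat.lt_ceil] at hB
      rwa [hd, div_div, mul_comm (n : ℝ) 2]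
    calc (1 : ℝ) ≤ Real.exp (7 / 16 * d + (A ∩ B).card * (-(7 / 8))) := by
          apply Real.one_le_exp
          linarith
      _ = Real.exp (7 / 16 * d) * Real.exp (-(7 / 8)) ^ (A ∩ B).card := by
          rw [Real.exp_add, Real.exp_nat_mul]
      _ ≤ _ := by gcongr
  have hexp : (1 - (m : ℝ) / (2 * n)) ^ m ≤ Real.exp (-(d / 2)) := by
    have h0 : 0 ≤ 1 - (m : ℝ) / (2 * n) := by
      rw [sub_nonneg, div_le_one (by positivity)]; linarith
    calc (1 - (m : ℝ) / (2 * n)) ^ m ≤ Real.exp (-((m : ℝ) / (2 * n))) ^ m := by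
          gcongr
          exact Real.one_sub_le_exp_neg _
      _ = Real.exp (-(d / 2)) := by
          rw [← Real.exp_nat_mul, hd]
          congr 1
          field_simp
  rw [Finset.card_eq_sum_ones, Nat.cast_sum]
  simp only [Nat.cast_one]
  calc _ ≤ ∑ B ∈ (Finset.powersetCard m (Finset.univ : Finset (Fin n))).filter
          (fun B => (A ∩ B).card < ⌈((m : ℝ) ^ 2) / (2 * n)⌉₊),
          Real.exp (7 / 16 * d) * (1 / 2 : ℝ) ^ (A ∩ B).card :=
        Finset.sum_le_sum fun B hB => hmark B (Finset.mem_filter.1 hB).2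
    _ ≤ ∑ B ∈ Finset.powersetCard m (Finset.univ : Finset (Fin n)),
          Real.exp (7 / 16 * d) * (1 / 2 : ℝ) ^ (A ∩ B).card :=
        Finset.sum_le_sum_of_subset_of_nonneg (Finset.filter_subset _ _)
          fun _ _ _ => by positivity
    _ ≤ Real.exp (7 / 16 * d) * (n.choose m * Real.exp (-(d / 2))) := by
        rw [← Finset.mul_sum]
        gcongr
        refine (sum_half_pow_card_inter_le hmn hn A).trans ?_
        rw [hA]
        gcongr
    _ = n.choose m * Real.exp (-((m : ℝ) ^ 2) / (16 * n)) := by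
        rw [mul_left_comm, ← Real.exp_add]
        congr 2
        rw [hd]
        field_simp
        ring

/-- overlap of two independent uniform random m-subsets: for independent
uniform random m-subsets S₁, S₂ of {1,…,n},
P(|S₁ ∩ S₂| ≥ ⌈m²/(2n)⌉) ≥ 1 − exp(−m²/(16n)). -/
theorem overlap_lower_bound {n m : ℕ} (hmn : m ≤ n)
    {Ω : Type*} [MeasurableSpace Ω] (μ : Measure Ω) [IsProbabilityMeasure μ]
    (S₁ S₂ : Ω → Finset (Fin n))
    (hmeas₁ : ∀ A : Finset (Fin n), MeasurableSet {ω | S₁ ω = A})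
    (hmeas₂ : ∀ A : Finset (Fin n), MeasurableSet {ω | S₂ ω = A})
    (hcard₁ : ∀ ω, (S₁ ω).card = m)
    (hcard₂ : ∀ ω, (S₂ ω).card = m)
    (hunif₁ : ∀ A : Finset (Fin n), A.card = m → μ {ω | S₁ ω = A} = 1 / (n.choose m))
    (hunif₂ : ∀ A : Finset (Fin n), A.card = m → μ {ω | S₂ ω = A} = 1 / (n.choose m))
    (hindep : ∀ A B : Finset (Fin n),
      μ {ω | S₁ ω = A ∧ S₂ ω = B} = μ {ω | S₁ ω = A} * μ {ω | S₂ ω = B}) :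
    1 - Real.exp (-((m : ℝ)^2) / (16 * n))
      ≤ (μ {ω | ⌈((m : ℝ)^2) / (2 * n)⌉₊ ≤ (S₁ ω ∩ S₂ ω).card}).toReal := by
  rcases Nat.eq_zero_or_pos n with hn | hn
  · subst hn
    simp
  set t := ⌈((m : ℝ) ^ 2) / (2 * n)⌉₊
  set P := Finset.powersetCard m (Finset.univ : Finset (Fin n))
  have hC : (0 : ℝ) < n.choose m := by exact_mod_cast Nat.choose_pos hmn
  have hbad : μ.real {ω | (S₁ ω ∩ S₂ ω).card < t} ≤ Real.exp (-((m : ℝ) ^ 2) / (16 * n)) := by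
    have hsub : {ω | (S₁ ω ∩ S₂ ω).card < t} ⊆
        ⋃ A ∈ P, ⋃ B ∈ P.filter (fun B => (A ∩ B).card < t), {ω | S₁ ω = A ∧ S₂ ω = B} := by
      intro ω hω
      simp only [Set.mem_iUnion]
      exact ⟨S₁ ω, by simp [P, hcard₁], S₂ ω, by simpa [P, hcard₂] using hω, rfl, rfl⟩
    have hpair {A B : Finset (Fin n)} (hA : A ∈ P) (hB : B ∈ P) :
        μ.real {ω | S₁ ω = A ∧ S₂ ω = B} = 1 / (n.choose m : ℝ) * (1 / n.choose m) := by
      rw [measureReal_def, hindep, hunif₁ A (Finset.mem_powersetCard.1 hA).2,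
        hunif₂ B (Finset.mem_powersetCard.1 hB).2]
      simp
    calc μ.real {ω | (S₁ ω ∩ S₂ ω).card < t}
        ≤ μ.real (⋃ A ∈ P, ⋃ B ∈ P.filter (fun B => (A ∩ B).card < t),
            {ω | S₁ ω = A ∧ S₂ ω = B}) := measureReal_mono hsub (measure_ne_top μ _)
      _ ≤ ∑ A ∈ P, ∑ B ∈ P.filter (fun B => (A ∩ B).card < t),
            μ.real {ω | S₁ ω = A ∧ S₂ ω = B} :=
          (measureReal_biUnion_finset_le _ _).trans
            (Finset.sum_le_sum fun A _ => measureReal_biUnion_finset_le _ _)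
      _ = ∑ A ∈ P, (P.filter (fun B => (A ∩ B).card < t)).card *
            (1 / (n.choose m : ℝ) * (1 / n.choose m)) := by
          refine Finset.sum_congr rfl fun A hA => ?_
          rw [Finset.sum_congr rfl fun B hB => hpair hA (Finset.mem_filter.1 hB).1,
            Finset.sum_const, nsmul_eq_mul]
      _ ≤ ∑ A ∈ P, n.choose m * Real.exp (-((m : ℝ) ^ 2) / (16 * n)) *
            (1 / (n.choose m : ℝ) * (1 / n.choose m)) := by
          refine Finset.sum_le_sum fun A hA => ?_
          gcongr
          exact card_filter_inter_lt_le hmn hn (Finset.mem_powersetCard.1 hA).2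
      _ = Real.exp (-((m : ℝ) ^ 2) / (16 * n)) := by
          rw [Finset.sum_const, Finset.card_powersetCard, Finset.card_univ, Fintype.card_fin,
            nsmul_eq_mul]
          field_simp
  have htot : 1 ≤ μ.real {ω | t ≤ (S₁ ω ∩ S₂ ω).card} +
      μ.real {ω | (S₁ ω ∩ S₂ ω).card < t} := by
    have hunion : {ω | t ≤ (S₁ ω ∩ S₂ ω).card} ∪ {ω | (S₁ ω ∩ S₂ ω).card < t} = Set.univ := by
      ext ω
      simp [le_or_gt]
    have h := measureReal_union_le (μ := μ) {ω | t ≤ (S₁ ω ∩ S₂ ω).card}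
      {ω | (S₁ ω ∩ S₂ ω).card < t}
    rwa [hunion, probReal_univ] at h
  rw [← measureReal_def]
  linarith
end

section
/- Let m ≤ n and let S_a, S_b, S_c be three mutually independent uniform random m-subsets of {1,…,n}. Then the random variables Y_{ab} = |S_a ∩ S_b| and Y_{ac} = |S_a ∩ S_c| are independent. -/
open MeasureTheory ProbabilityTheory BigOperators

/-- Two finsets of the same size are related by a permutation, so a sum over all `B` of a quantity
depending only on `#(A ∩ B)` and `#B` depends on `A` only through its size. -/
theorem sum_card_inter_eq_of_card_eq {α M : Type*} [Fintype α] [DecidableEq α] [AddCommMonoid M]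
    (F : ℕ → ℕ → M) {A A' : Finset α} (h : A.card = A'.card) :
    ∑ B : Finset α, F (A ∩ B).card B.card = ∑ B : Finset α, F (A' ∩ B).card B.card := by
  let e : {x // x ∈ A} ≃ {x // x ∈ A'} := Finset.equivOfCardEq h
  let σ : Equiv.Perm α := e.extendSubtype
  have hσ : A.map σ.toEmbedding = A' := by
    refine Finset.eq_of_subset_of_card_le (fun x hx => ?_) (by simp [h])
    obtain ⟨y, hy, rfl⟩ := Finset.mem_map.1 hx
    exact e.extendSubtype_mem y hy
  refine Fintype.sum_equiv σ.finsetCongr _ _ fun B => ?_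
  rw [Equiv.finsetCongr_apply, ← hσ, ← Finset.map_inter, Finset.card_map, Finset.card_map]

/-- The probability of a pair of overlap events, factored conditionally on the common subset. -/
theorem measure_card_inter_mem_and_card_inter_mem {α Ω : Type*} [Fintype α] [DecidableEq α]
    [MeasurableSpace Ω] (μ : Measure Ω) (Sa Sb Sc : Ω → Finset α)
    (hmeasa : ∀ A, MeasurableSet {ω | Sa ω = A})
    (hmeasb : ∀ A, MeasurableSet {ω | Sb ω = A})
    (hmeasc : ∀ A, MeasurableSet {ω | Sc ω = A})
    (hindep : ∀ A B C, μ {ω | Sa ω = A ∧ Sb ω = B ∧ Sc ω = C}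
      = μ {ω | Sa ω = A} * μ {ω | Sb ω = B} * μ {ω | Sc ω = C}) (s t : Set ℕ) :
    μ {ω | (Sa ω ∩ Sb ω).card ∈ s ∧ (Sa ω ∩ Sc ω).card ∈ t} =
      ∑ A, μ {ω | Sa ω = A} *
        ((∑ B, s.indicator 1 (A ∩ B).card * μ {ω | Sb ω = B}) *
          ∑ C, t.indicator 1 (A ∩ C).card * μ {ω | Sc ω = C}) := by
  classical
  let T : Ω → Finset α × Finset α × Finset α := fun ω => (Sa ω, Sb ω, Sc ω)
  have hT (A B C : Finset α) :
      T ⁻¹' {(A, B, C)} = {ω | Sa ω = A ∧ Sb ω = B ∧ Sc ω = C} := by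
    ext ω; simp [T]
  have hsum := sum_measure_preimage_singleton (μ := μ) (f := T)
    (Finset.univ.filter fun x => (x.1 ∩ x.2.1).card ∈ s ∧ (x.1 ∩ x.2.2).card ∈ t)
    (fun x _ => by
      obtain ⟨A, B, C⟩ := x
      rw [hT]
      exact (hmeasa A).inter ((hmeasb B).inter (hmeasc C)))
  have hpre : T ⁻¹' ((Finset.univ.filter fun x : Finset α × Finset α × Finset α =>
        (x.1 ∩ x.2.1).card ∈ s ∧ (x.1 ∩ x.2.2).card ∈ t : Finset _) : Set _) =
      {ω | (Sa ω ∩ Sb ω).card ∈ s ∧ (Sa ω ∩ Sc ω).card ∈ t} := by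
    ext ω; simp [T]
  rw [← hpre, ← hsum, Finset.sum_filter, Fintype.sum_prod_type]
  refine Finset.sum_congr rfl fun A _ => ?_
  rw [Fintype.sum_prod_type, Finset.sum_mul_sum, Finset.mul_sum]
  refine Finset.sum_congr rfl fun B _ => ?_
  rw [Finset.mul_sum]
  refine Finset.sum_congr rfl fun C _ => ?_
  rw [hT, hindep]
  by_cases hs : (A ∩ B).card ∈ s <;> by_cases ht : (A ∩ C).card ∈ t <;> simp [hs, ht, mul_assoc]

/-- independence of overlaps sharing a common subset: if S_a, S_b, S_c are
mutually independent uniform random m-subsets of {1,…,n}, then Y_ab = |S_a ∩ S_b| and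
Y_ac = |S_a ∩ S_c| are independent. -/
theorem overlap_indep {n m : ℕ} (hmn : m ≤ n)
    {Ω : Type*} [MeasurableSpace Ω] (μ : Measure Ω) [IsProbabilityMeasure μ]
    (Sa Sb Sc : Ω → Finset (Fin n))
    (hmeasa : ∀ A : Finset (Fin n), MeasurableSet {ω | Sa ω = A})
    (hmeasb : ∀ A : Finset (Fin n), MeasurableSet {ω | Sb ω = A})
    (hmeasc : ∀ A : Finset (Fin n), MeasurableSet {ω | Sc ω = A})
    (hcarda : ∀ ω, (Sa ω).card = m)
    (hcardb : ∀ ω, (Sb ω).card = m)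
    (hcardc : ∀ ω, (Sc ω).card = m)
    (hunifa : ∀ A : Finset (Fin n), A.card = m → μ {ω | Sa ω = A} = 1 / (n.choose m))
    (hunifb : ∀ A : Finset (Fin n), A.card = m → μ {ω | Sb ω = A} = 1 / (n.choose m))
    (hunifc : ∀ A : Finset (Fin n), A.card = m → μ {ω | Sc ω = A} = 1 / (n.choose m))
    -- mutual independence of the three subsets
    (hindep : ∀ A B C : Finset (Fin n),
      μ {ω | Sa ω = A ∧ Sb ω = B ∧ Sc ω = C}
        = μ {ω | Sa ω = A} * μ {ω | Sb ω = B} * μ {ω | Sc ω = C}) :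
    IndepFun (fun ω => (Sa ω ∩ Sb ω).card) (fun ω => (Sa ω ∩ Sc ω).card) μ := by
  have hlaw (S : Ω → Finset (Fin n)) (hcard : ∀ ω, (S ω).card = m)
      (hunif : ∀ A : Finset (Fin n), A.card = m → μ {ω | S ω = A} = 1 / (n.choose m))
      (B : Finset (Fin n)) :
      μ {ω | S ω = B} = if B.card = m then 1 / (n.choose m : ENNReal) else 0 := by
    split_ifs with hB
    · exact hunif B hB
    · rw [show {ω | S ω = B} = ∅ from
        Set.eq_empty_of_forall_notMem fun ω hω => hB (hω ▸ hcard ω), measure_empty]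
  have hconst (S : Ω → Finset (Fin n)) (hcard : ∀ ω, (S ω).card = m)
      (hunif : ∀ A : Finset (Fin n), A.card = m → μ {ω | S ω = A} = 1 / (n.choose m))
      (s : Set ℕ) : ∃ q : ENNReal, ∀ A : Finset (Fin n), A.card = m →
        ∑ B, s.indicator 1 (A ∩ B).card * μ {ω | S ω = B} = q := by
    obtain ⟨ω₀⟩ := nonempty_of_isProbabilityMeasure μ
    refine ⟨∑ B, s.indicator 1 (Sa ω₀ ∩ B).card * μ {ω | S ω = B}, fun A hA => ?_⟩
    simp only [hlaw S hcard hunif]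
    exact sum_card_inter_eq_of_card_eq
      (fun i k => s.indicator 1 i * if k = m then 1 / (n.choose m : ENNReal) else 0)
      (hA.trans (hcarda ω₀).symm)
  have htotal (S : Ω → Finset (Fin n)) (hmeas : ∀ A, MeasurableSet {ω | S ω = A}) :
      ∑ A, μ {ω | S ω = A} = 1 := by
    have h := sum_measure_preimage_singleton (μ := μ) (f := S) Finset.univ fun A _ => hmeas A
    rw [Finset.coe_univ, Set.preimage_univ, measure_univ] at h
    exact h
  have hjoint (s t : Set ℕ) (q r : ENNReal)
      (hq : ∀ A : Finset (Fin n), A.card = m →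
        ∑ B, s.indicator 1 (A ∩ B).card * μ {ω | Sb ω = B} = q)
      (hr : ∀ A : Finset (Fin n), A.card = m →
        ∑ C, t.indicator 1 (A ∩ C).card * μ {ω | Sc ω = C} = r) :
      μ {ω | (Sa ω ∩ Sb ω).card ∈ s ∧ (Sa ω ∩ Sc ω).card ∈ t} = q * r := by
    rw [measure_card_inter_mem_and_card_inter_mem μ Sa Sb Sc hmeasa hmeasb hmeasc hindep,
      ← one_mul (q * r), ← htotal Sa hmeasa, Finset.sum_mul]
    refine Finset.sum_congr rfl fun A _ => ?_
    by_cases hA : A.card = m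
    · rw [hq A hA, hr A hA]
    · simp [hlaw Sa hcarda hunifa, hA]
  rw [indepFun_iff_measure_inter_preimage_eq_mul]
  intro s t _ _
  obtain ⟨q, hq⟩ := hconst Sb hcardb hunifb s
  obtain ⟨r, hr⟩ := hconst Sc hcardc hunifc t
  have hs := hjoint s Set.univ q 1 hq fun A _ => by simpa using htotal Sc hmeasc
  have ht := hjoint Set.univ t 1 r (fun A _ => by simpa using htotal Sb hmeasb) hr
  simp only [Set.mem_univ, and_true, true_and, mul_one, one_mul] at hs ht
  exact (hjoint s t q r hq hr).trans (congrArg₂ (· * ·) hs.symm ht.symm)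
end
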